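/- In ℝ², let 1 < k < 2 and let V^k be the space with norm ‖v;V^k‖ = ‖⟨ω⟩^k v‖₂ ∨ ‖⟨ω⟩^{k−1} xv‖₂. Then ‖ω^{2k−2}(x v₁ v₂)‖_{L²} ≤ C ‖v₁; V^k‖ ‖v₂; V^k‖ for all v₁, v₂ ∈ V^k (with xv₁v₂ meaning the product x·v₁ v₂ componentwise). -/

import Mathlib

open MeasureTheory Complex
open scoped FourierTransform ENNReal

noncomputable section

abbrev V2 := EuclideanSpace ℝ (Fin 2)

/-- `ω^ℓ = (−Δ)^{ℓ/2}` on `ℝ²`, as the Fourier multiplier `|ξ|^ℓ`. -/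
def omMul (ℓ : ℝ) (f : V2 → ℂ) : V2 → ℂ :=
  𝓕⁻ (fun ξ => (((2 * Real.pi * ‖ξ‖) ^ ℓ : ℝ) : ℂ) * 𝓕 f ξ)

/-- `⟨ω⟩^k = (1−Δ)^{k/2}` as a Fourier multiplier. -/
def japMul (k : ℝ) (f : V2 → ℂ) : V2 → ℂ :=
  𝓕⁻ (fun ξ => (((1 + (2 * Real.pi * ‖ξ‖) ^ 2) ^ (k / 2) : ℝ) : ℂ) * 𝓕 f ξ)

/-- The `V^k` norm `‖⟨ω⟩^k v‖₂ ∨ ‖⟨ω⟩^{k−1} x v‖₂`. -/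
def VkNorm (k : ℝ) (f : V2 → ℂ) : ℝ≥0∞ :=
  eLpNorm (japMul k f) 2 volume ⊔
    eLpNorm (fun x : V2 => (WithLp.equiv 2 (Fin 2 → ℂ)).symm
      (fun j => japMul (k - 1) (fun y => (y j : ℂ) * f y) x)) 2 volume

/-!
On the Fourier side, multiplication by a component of `x` becomes a derivative and the product
becomes a convolution `∫ ∂a(ξ - η) b(η) dη`. With `X = ⟨2π(ξ - η)⟩²` and `Y = ⟨2πη⟩²`, integrate
by parts only the portion `X / (X + Y)` of the integrand. The derivative, which costs one power of
decay, is thereby shifted to the factor of lower frequency, and all three resulting terms are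
controlled by the weight `√(min X Y) (X Y)^(-k/2)`. Since `max X Y ≥ |πξ|²`, this weight times
`|2πξ|^(2k - 2)` is at most the sum of a kernel in `(ξ, ξ - η)` and a kernel in `(ξ, η)`, whose
`L²` norms in `η` are bounded uniformly in `ξ` by scaling. Cauchy–Schwarz in `η` and Plancherel
conclude. In dimension `d` the same argument works with `2k - 2` replaced by `2k - 1 - d/2`.
-/

open Module (finrank)
open scoped Real NNReal SchwartzMap LineDeriv

section Plancherel

variable {E F : Type*} [NormedAddCommGroup E] [InnerProductSpace ℝ E] [FiniteDimensional ℝ E]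
  [MeasurableSpace E] [BorelSpace E] [NormedAddCommGroup F] [InnerProductSpace ℂ F]

lemma continuous_fourierInv {g : E → F} (hg : Integrable g) : Continuous (𝓕⁻ g) := by
  have h_eq : 𝓕⁻ g = fun x => 𝓕 g (-x) := funext (Real.fourierInv_eq_fourier_neg g)
  rw [h_eq]
  exact (VectorFourier.fourierIntegral_continuous Real.continuous_fourierChar
    (by exact continuous_inner) hg).comp continuous_neg

variable [CompleteSpace F]

lemma integral_fourierInv_smul_eq (φ : 𝓢(E, ℂ)) {g : E → F} (hg : Integrable g) :
    ∫ x, (𝓕⁻ φ) x • g x = ∫ x, φ x • (𝓕⁻ g) x := by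
  have h_flip : (-innerₗ E : E →ₗ[ℝ] E →ₗ[ℝ] ℝ).flip = -innerₗ E := by
    ext; simp [real_inner_comm]
  have h := VectorFourier.integral_fourierIntegral_smul_eq_flip (L := -innerₗ E) (μ := volume)
    (ν := volume) Real.continuous_fourierChar (by simpa using! continuous_inner.neg)
    φ.integrable hg
  rw [h_flip] at h
  simpa only [SchwartzMap.fourierInv_coe] using! h

/- Both sides define the same tempered distribution, so they agree against test functions. -/
lemma fourierInv_ae_eq_fourierInv_toLp {g : E → F} (hg1 : Integrable g)
    (hg2 : MemLp g 2 volume) :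
    𝓕⁻ g =ᵐ[volume] (𝓕⁻ (hg2.toLp g) : Lp F 2 (volume : Measure E)) := by
  refine ae_eq_of_integral_contDiff_smul_eq (continuous_fourierInv hg1).locallyIntegrable
    ((Lp.memLp _).locallyIntegrable (by norm_num)) fun φ hφ hφc => ?_
  have hφc' : HasCompactSupport (fun x => (φ x : ℂ)) :=
    hφc.comp_left (g := fun r : ℝ => (r : ℂ)) Complex.ofReal_zero
  let Φ : 𝓢(E, ℂ) := hφc'.toSchwartzMap (Complex.ofRealCLM.contDiff.comp hφ)
  have h_smul (x : E) (y : F) : φ x • y = Φ x • y := (Complex.coe_smul (φ x) y).symm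
  have h_distr := congrArg (fun T => T Φ)
    (MeasureTheory.Lp.fourierInv_toTemperedDistribution_eq (hg2.toLp g))
  simp only [TemperedDistribution.fourierInv_apply, Lp.toTemperedDistribution_apply] at h_distr
  simp only [h_smul]
  rw [← integral_fourierInv_smul_eq Φ hg1, ← h_distr]
  refine integral_congr_ae ?_
  filter_upwards [hg2.coeFn_toLp] with x hx
  rw [hx]

lemma eLpNorm_fourierInv {g : E → F} (hg1 : Integrable g) (hg2 : MemLp g 2 volume) :
    eLpNorm (𝓕⁻ g) 2 volume = eLpNorm g 2 volume := by
  have h_isometry : ‖(𝓕⁻ (hg2.toLp g) : Lp F 2 (volume : Measure E))‖ = ‖hg2.toLp g‖ :=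
    (Lp.fourierTransformₗᵢ E F).symm.norm_map _
  rwa [eLpNorm_congr_ae (fourierInv_ae_eq_fourierInv_toLp hg1 hg2),
    ← eLpNorm_congr_ae hg2.coeFn_toLp,
    ← ENNReal.toReal_eq_toReal_iff' (Lp.eLpNorm_ne_top _) (Lp.eLpNorm_ne_top _),
    ← Lp.norm_def, ← Lp.norm_def]

end Plancherel

section Schwartz

variable {E : Type*} [NormedAddCommGroup E] [InnerProductSpace ℝ E]

lemma smulLeftCLM_inner_apply (v : 𝓢(E, ℂ)) (e x : E) :
    SchwartzMap.smulLeftCLM ℂ (inner ℝ · e) v x = (inner ℝ x e : ℂ) * v x := by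
  rw [SchwartzMap.smulLeftCLM_apply_apply (by fun_prop)]
  rfl

variable [FiniteDimensional ℝ E] [MeasurableSpace E] [BorelSpace E]

lemma fourier_mul_eq_integral (w v : 𝓢(E, ℂ)) (ξ : E) :
    𝓕 (fun x => w x * v x) ξ = ∫ η, (𝓕 w) (ξ - η) * (𝓕 v) η := by
  let B := ContinuousLinearMap.mul ℂ ℂ
  have h_inv : 𝓕⁻ (SchwartzMap.convolution B (𝓕 v) (𝓕 w)) = SchwartzMap.pairing B v w := by
    ext x
    have h_neg (u : 𝓢(E, ℂ)) : (𝓕 u) (-x) = (𝓕⁻ u) x := by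
      rw [SchwartzMap.fourierInv_coe, Real.fourierInv_eq_fourier_neg, SchwartzMap.fourier_coe]
    rw [← h_neg, SchwartzMap.fourier_convolution]
    simp [h_neg]
  have h_pairing : (fun x => w x * v x) = SchwartzMap.pairing B v w := by
    ext x; simp [B, mul_comm]
  rw [h_pairing, ← SchwartzMap.fourier_coe, ← h_inv, FourierTransform.fourier_fourierInv_eq,
    SchwartzMap.convolution_apply]
  simp [B, MeasureTheory.convolution, mul_comm]

lemma lineDeriv_fourier_apply (v : 𝓢(E, ℂ)) (e ξ : E) :
    (∂_{e} (𝓕 v)) ξ = -(2 * π * I) * (𝓕 (SchwartzMap.smulLeftCLM ℂ (inner ℝ · e) v)) ξ := by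
  rw [SchwartzMap.lineDerivOp_fourier_eq, FourierTransform.fourier_smul]
  simp

lemma integrable_comp_sub_mul_mul (f g : 𝓢(E, ℂ)) {m : E → ℝ} {A : ℝ} (hm : Continuous m)
    (hmA : ∀ η, |m η| ≤ A) (ξ : E) :
    Integrable (fun η => f (ξ - η) * g η * (m η : ℂ)) := by
  have h_mul : Integrable (fun η => f (ξ - η) * (m η : ℂ) * g η) := by
    refine g.integrable.bdd_mul (c := SchwartzMap.seminorm ℝ 0 0 f * A) (by fun_prop)
      (.of_forall fun η => ?_)
    rw [norm_mul, Complex.norm_real]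
    exact mul_le_mul (SchwartzMap.norm_le_seminorm ℝ f _) (hmA η) (abs_nonneg _) (by positivity)
  simpa only [mul_right_comm] using h_mul

lemma integrable_comp_sub_mul_fderiv (f g : 𝓢(E, ℂ)) {m : E → ℝ} {B : ℝ} (hm : ContDiff ℝ 1 m)
    (hmB : ∀ η, ‖fderiv ℝ m η‖ ≤ B) (e ξ : E) :
    Integrable (fun η => f (ξ - η) * g η * (fderiv ℝ m η e : ℂ)) :=
  integrable_comp_sub_mul_mul f g ((hm.continuous_fderiv one_ne_zero).clm_apply continuous_const)
    (fun η => (fderiv ℝ m η).le_of_opNorm_le (hmB η) e) ξ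

lemma integral_lineDeriv_mul_mul_eq (a b : 𝓢(E, ℂ)) {m : E → ℝ} {A B : ℝ} (hm : ContDiff ℝ 1 m)
    (hmA : ∀ η, |m η| ≤ A) (hmB : ∀ η, ‖fderiv ℝ m η‖ ≤ B) (e ξ : E) :
    ∫ η, (∂_{e} a) (ξ - η) * b η * (m η : ℂ) =
      (∫ η, a (ξ - η) * (∂_{e} b) η * (m η : ℂ))
        + ∫ η, a (ξ - η) * b η * (fderiv ℝ m η e : ℂ) := by
  have int_db := integrable_comp_sub_mul_mul a (∂_{e} b) hm.continuous hmA ξ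
  have int_dm := integrable_comp_sub_mul_fderiv a b hm hmB e ξ
  have h_parts := integral_bilinear_hasLineDerivAt_right_eq_neg_left_of_integrable
    (μ := (volume : Measure E)) (B := ContinuousLinearMap.mul ℝ ℂ) (v := e)
    (f := fun η => a (ξ - η)) (f' := fun η => -(∂_{e} a) (ξ - η))
    (g := fun η => b η * (m η : ℂ))
    (g' := fun η => (∂_{e} b) η * (m η : ℂ) + b η * (fderiv ℝ m η e : ℂ))
    (by simpa [mul_assoc] using (integrable_comp_sub_mul_mul (∂_{e} a) b hm.continuous hmA ξ).neg)
    (by simpa [mul_add, mul_assoc] using! int_db.add int_dm)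
    (by simpa [mul_assoc] using integrable_comp_sub_mul_mul a b hm.continuous hmA ξ)
    (fun η _ => by
      have h := (a.differentiableAt (x := ξ - η)).hasFDerivAt.comp η
        ((hasFDerivAt_id η).const_sub ξ)
      simpa [SchwartzMap.lineDerivOp_apply_eq_fderiv] using! h.hasLineDerivAt e)
    (fun η _ => by
      have hb := (b.differentiableAt (x := η)).hasFDerivAt.hasLineDerivAt e
      have hm := (hm.differentiable one_ne_zero η).hasFDerivAt.hasLineDerivAt e
      simpa [HasLineDerivAt, SchwartzMap.lineDerivOp_apply_eq_fderiv]
        using! HasDerivAt.mul hb hm.ofReal_comp)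
  simpa only [ContinuousLinearMap.mul_apply', mul_add, ← mul_assoc, neg_mul, integral_neg,
    neg_neg, integral_add int_db int_dm] using h_parts.symm

lemma integral_lineDeriv_mul_eq (a b : 𝓢(E, ℂ)) {m : E → ℝ} {A B : ℝ} (hm : ContDiff ℝ 1 m)
    (hmA : ∀ η, |m η| ≤ A) (hmB : ∀ η, ‖fderiv ℝ m η‖ ≤ B) (e ξ : E) :
    ∫ η, (∂_{e} a) (ξ - η) * b η =
      ∫ η, ((∂_{e} a) (ξ - η) * b η * ((1 - m η : ℝ) : ℂ)
        + a (ξ - η) * (∂_{e} b) η * (m η : ℂ)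
        + a (ξ - η) * b η * (fderiv ℝ m η e : ℂ)) := by
  have int_da_compl : Integrable fun η => (∂_{e} a) (ξ - η) * b η * ((1 - m η : ℝ) : ℂ) :=
    integrable_comp_sub_mul_mul (∂_{e} a) b (continuous_const.sub hm.continuous) (A := 1 + A)
      (fun η => (abs_sub _ _).trans (by simpa using hmA η)) ξ
  have int_da := integrable_comp_sub_mul_mul (∂_{e} a) b hm.continuous hmA ξ
  have int_db := integrable_comp_sub_mul_mul a (∂_{e} b) hm.continuous hmA ξ
  have int_dm := integrable_comp_sub_mul_fderiv a b hm hmB e ξ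
  calc ∫ η, (∂_{e} a) (ξ - η) * b η
      = ∫ η, ((∂_{e} a) (ξ - η) * b η * ((1 - m η : ℝ) : ℂ)
          + (∂_{e} a) (ξ - η) * b η * (m η : ℂ)) := by
        congr with η
        push_cast
        ring
    _ = _ := by
        rw [integral_add int_da_compl int_da, integral_lineDeriv_mul_mul_eq a b hm hmA hmB,
          ← add_assoc, ← integral_add int_da_compl int_db]
        exact (integral_add (int_da_compl.add int_db) int_dm).symm

end Schwartz

section JapaneseBracket

variable {E : Type*} [NormedAddCommGroup E]

/-- The squared Japanese bracket `⟨2πξ⟩²`, that is, the symbol of `1 - Δ` in the normalization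
`𝓕 f ξ = ∫ exp (-2πi⟨x, ξ⟩) f x`. -/
def japSq (ξ : E) : ℝ := 1 + (2 * π * ‖ξ‖) ^ 2

lemma one_le_japSq (ξ : E) : 1 ≤ japSq ξ := le_add_of_nonneg_right (sq_nonneg _)

lemma japSq_pos (ξ : E) : 0 < japSq ξ := one_pos.trans_le (one_le_japSq ξ)

lemma sq_le_japSq (ξ : E) : (2 * π * ‖ξ‖) ^ 2 ≤ japSq ξ := le_add_of_nonneg_left zero_le_one

lemma abs_rpow_le_japSq_rpow {s : ℝ} (hs : 0 ≤ s) (ξ : E) :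
    |(2 * π * ‖ξ‖) ^ s| ≤ japSq ξ ^ (s / 2) := by
  have h_base : 2 * π * ‖ξ‖ ≤ √(japSq ξ) := Real.le_sqrt_of_sq_le (sq_le_japSq ξ)
  rw [abs_of_nonneg (by positivity), Real.rpow_div_two_eq_sqrt s (japSq_pos ξ).le]
  gcongr

lemma continuous_japSq : Continuous (japSq : E → ℝ) := by
  unfold japSq
  fun_prop

lemma sq_div_four_le_max_japSq (ξ η : E) :
    (2 * π * ‖ξ‖) ^ 2 / 4 ≤ max (japSq (ξ - η)) (japSq η) := by
  have h_tri : 2 * π * ‖ξ‖ ≤ 2 * π * ‖ξ - η‖ + 2 * π * ‖η‖ := by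
    rw [← mul_add]
    gcongr
    exact norm_le_norm_sub_add ξ η
  calc (2 * π * ‖ξ‖) ^ 2 / 4
      ≤ (2 * π * ‖ξ - η‖ + 2 * π * ‖η‖) ^ 2 / 4 := by gcongr
    _ ≤ ((2 * π * ‖ξ - η‖) ^ 2 + (2 * π * ‖η‖) ^ 2) / 2 := by
        linarith [add_sq_le (a := 2 * π * ‖ξ - η‖) (b := 2 * π * ‖η‖)]
    _ ≤ (japSq (ξ - η) + japSq η) / 2 := by
        gcongr <;> exact sq_le_japSq _
    _ ≤ max (japSq (ξ - η)) (japSq η) := by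
        linarith [le_max_left (japSq (ξ - η)) (japSq η), le_max_right (japSq (ξ - η)) (japSq η)]

/-- Smooth weight `X / (X + Y)`, where `X = ⟨2π(ξ - η)⟩²` and `Y = ⟨2πη⟩²`. It is close to one when
the frequency `ξ - η` dominates `η`, and small in the opposite regime. -/
def freqSplit (ξ η : E) : ℝ := japSq (ξ - η) / (japSq (ξ - η) + japSq η)

lemma japSq_add_japSq_pos (ξ η : E) : 0 < japSq (ξ - η) + japSq η :=
  add_pos (japSq_pos _) (japSq_pos _)

lemma freqSplit_nonneg (ξ η : E) : 0 ≤ freqSplit ξ η :=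
  div_nonneg (japSq_pos _).le (japSq_add_japSq_pos ξ η).le

lemma one_sub_freqSplit (ξ η : E) :
    1 - freqSplit ξ η = japSq η / (japSq (ξ - η) + japSq η) := by
  rw [freqSplit, one_sub_div (japSq_add_japSq_pos ξ η).ne', add_sub_cancel_left]

lemma one_sub_freqSplit_nonneg (ξ η : E) : 0 ≤ 1 - freqSplit ξ η := by
  rw [one_sub_freqSplit]
  exact div_nonneg (japSq_pos _).le (japSq_add_japSq_pos ξ η).le

lemma abs_freqSplit_le_one (ξ η : E) : |freqSplit ξ η| ≤ 1 := by
  rw [abs_of_nonneg (freqSplit_nonneg ξ η)]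
  exact sub_nonneg.1 (one_sub_freqSplit_nonneg ξ η)

variable [InnerProductSpace ℝ E]

lemma contDiff_japSq {n : WithTop ℕ∞} : ContDiff ℝ n (japSq : E → ℝ) := by
  unfold japSq
  simp only [mul_pow _ ‖_‖]
  exact contDiff_const.add (contDiff_const.mul (contDiff_norm_sq ℝ))

lemma hasTemperateGrowth_japSq_rpow (r : ℝ) :
    Function.HasTemperateGrowth (fun ξ : E => japSq ξ ^ r) := by
  have h_eq : (fun ξ : E => japSq ξ ^ r) =
      (fun x : E => (1 + ‖x‖ ^ 2) ^ r) ∘ fun ξ : E => (2 * π) • ξ := by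
    ext ξ
    simp [japSq, norm_smul, abs_of_pos Real.pi_pos]
  rw [h_eq]
  exact (Function.hasTemperateGrowth_one_add_norm_sq_rpow E r).comp
    (((2 * π) • ContinuousLinearMap.id ℝ E).hasTemperateGrowth)

lemma norm_fderiv_japSq_le (ξ : E) : ‖fderiv ℝ (japSq : E → ℝ) ξ‖ ≤ 4 * π * √(japSq ξ) := by
  have h_deriv : HasFDerivAt japSq ((2 * π) ^ 2 • (2 • innerSL ℝ ξ)) ξ := by
    unfold japSq
    simp only [mul_pow _ ‖_‖]
    exact (((hasFDerivAt_id ξ).norm_sq).const_mul ((2 * π) ^ 2)).const_add 1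
  calc ‖fderiv ℝ (japSq : E → ℝ) ξ‖ = (2 * π) ^ 2 * (2 * ‖ξ‖) := by
        rw [h_deriv.fderiv, norm_smul, Real.norm_of_nonneg (by positivity),
          RCLike.norm_nsmul ℝ, innerSL_apply_norm, nsmul_eq_mul, Nat.cast_ofNat]
    _ = 4 * π * (2 * π * ‖ξ‖) := by ring
    _ ≤ 4 * π * √(japSq ξ) := by
        gcongr
        exact Real.le_sqrt_of_sq_le (sq_le_japSq ξ)

lemma contDiff_japSq_sub {n : WithTop ℕ∞} (ξ : E) : ContDiff ℝ n fun η => japSq (ξ - η) :=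
  contDiff_japSq.comp (contDiff_const.sub contDiff_id)

lemma contDiff_freqSplit {n : WithTop ℕ∞} (ξ : E) : ContDiff ℝ n (freqSplit ξ) :=
  (contDiff_japSq_sub ξ).div ((contDiff_japSq_sub ξ).add contDiff_japSq)
    fun η => (japSq_add_japSq_pos ξ η).ne'

lemma norm_fderiv_japSq_sub_le (ξ η : E) :
    ‖fderiv ℝ (fun ζ => japSq (ξ - ζ)) η‖ ≤ 4 * π * √(japSq (ξ - η)) := by
  have hJ : DifferentiableAt ℝ (japSq : E → ℝ) (ξ - η) :=
    (contDiff_japSq (n := 1)).differentiable one_ne_zero _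
  have h_deriv : HasFDerivAt (fun ζ => japSq (ξ - ζ)) (-fderiv ℝ japSq (ξ - η)) η := by
    simpa using! hJ.hasFDerivAt.comp η ((hasFDerivAt_id η).const_sub ξ)
  rw [h_deriv.fderiv, norm_neg]
  exact norm_fderiv_japSq_le (ξ - η)

lemma smul_fderiv_freqSplit (ξ η : E) :
    (japSq (ξ - η) + japSq η) • fderiv ℝ (freqSplit ξ) η =
      (1 - freqSplit ξ η) • fderiv ℝ (fun ζ => japSq (ξ - ζ)) η
        - freqSplit ξ η • fderiv ℝ japSq η := by
  have hX : DifferentiableAt ℝ (fun ζ => japSq (ξ - ζ)) η :=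
    (contDiff_japSq_sub (n := 1) ξ).differentiable one_ne_zero η
  have hY : DifferentiableAt ℝ (japSq : E → ℝ) η :=
    (contDiff_japSq (n := 1)).differentiable one_ne_zero η
  have hm : DifferentiableAt ℝ (freqSplit ξ) η :=
    (contDiff_freqSplit (n := 1) ξ).differentiable one_ne_zero η
  have h_mul : (fun ζ => freqSplit ξ ζ * (japSq (ξ - ζ) + japSq ζ)) = fun ζ => japSq (ξ - ζ) :=
    funext fun ζ => div_mul_cancel₀ _ (japSq_add_japSq_pos ξ ζ).ne'
  have h_deriv := congrArg (fderiv ℝ · η) h_mul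
  simp only [fderiv_fun_mul hm (hX.fun_add hY), fderiv_fun_add hX hY] at h_deriv
  rw [sub_smul, one_smul, sub_sub, ← smul_add]
  exact eq_sub_of_add_eq' h_deriv

lemma norm_fderiv_freqSplit_le (ξ η : E) :
    ‖fderiv ℝ (freqSplit ξ) η‖ ≤ 4 * π / √(japSq (ξ - η) + japSq η) := by
  set D := japSq (ξ - η) + japSq η
  have hD_pos : 0 < D := japSq_add_japSq_pos ξ η
  have hX : ‖fderiv ℝ (fun ζ => japSq (ξ - ζ)) η‖ ≤ 4 * π * √D := by
    refine (norm_fderiv_japSq_sub_le ξ η).trans ?_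
    gcongr
    exact le_add_of_nonneg_right (japSq_pos η).le
  have hY : ‖fderiv ℝ (japSq : E → ℝ) η‖ ≤ 4 * π * √D := by
    refine (norm_fderiv_japSq_le _).trans ?_
    gcongr
    exact le_add_of_nonneg_left (japSq_pos _).le
  have h_norm : D * ‖fderiv ℝ (freqSplit ξ) η‖ ≤ 4 * π * √D := by
    calc D * ‖fderiv ℝ (freqSplit ξ) η‖
        = ‖D • fderiv ℝ (freqSplit ξ) η‖ := by
          rw [norm_smul, Real.norm_of_nonneg hD_pos.le]
      _ ≤ (1 - freqSplit ξ η) * ‖fderiv ℝ (fun ζ => japSq (ξ - ζ)) η‖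
          + freqSplit ξ η * ‖fderiv ℝ (japSq : E → ℝ) η‖ := by
          rw [smul_fderiv_freqSplit]
          refine (norm_sub_le _ _).trans_eq ?_
          rw [norm_smul, norm_smul, Real.norm_of_nonneg (one_sub_freqSplit_nonneg ξ η),
            Real.norm_of_nonneg (freqSplit_nonneg ξ η)]
      _ ≤ (1 - freqSplit ξ η) * (4 * π * √D) + freqSplit ξ η * (4 * π * √D) :=
          add_le_add (mul_le_mul_of_nonneg_left hX (one_sub_freqSplit_nonneg ξ η))
            (mul_le_mul_of_nonneg_left hY (freqSplit_nonneg ξ η))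
      _ = 4 * π * √D := by ring
  rw [le_div_iff₀ (Real.sqrt_pos.2 hD_pos)]
  refine le_of_mul_le_mul_right ?_ (Real.sqrt_pos.2 hD_pos)
  rwa [mul_assoc, Real.mul_self_sqrt hD_pos.le, mul_comm]

lemma norm_fderiv_freqSplit_le_const (ξ η : E) : ‖fderiv ℝ (freqSplit ξ) η‖ ≤ 4 * π := by
  refine (norm_fderiv_freqSplit_le ξ η).trans (div_le_self (by positivity) ?_)
  exact Real.one_le_sqrt.2 ((one_le_japSq η).trans (le_add_of_nonneg_left (japSq_pos _).le))

end JapaneseBracket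

section BalancedWeight

/-- The weight `√(min X Y) (X Y)^(-k/2)`, a common bound for the weights of the three terms
produced by the integration by parts; in it, half a power is given back to the smaller argument. -/
def balancedWeight (k X Y : ℝ) : ℝ := √(min X Y) * (X * Y) ^ (-k / 2)

/-- The function `X ^ ((1 - k) / 2) * (max X T) ^ (-k / 2)`, which bounds the balanced weight of
`X` and `Y` when `X ≤ Y` and `T ≤ Y`. -/
def decayProfile (k T X : ℝ) : ℝ := X ^ ((1 - k) / 2) * max X T ^ (-k / 2)

variable {k T X Y : ℝ}

lemma balancedWeight_comm (k X Y : ℝ) : balancedWeight k X Y = balancedWeight k Y X := by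
  rw [balancedWeight, balancedWeight, min_comm, mul_comm X Y]

lemma decayProfile_nonneg (hX : 0 ≤ X) : 0 ≤ decayProfile k T X :=
  mul_nonneg (Real.rpow_nonneg hX _) (Real.rpow_nonneg (le_max_of_le_left hX) _)

lemma sqrt_mul_rpow_neg_half (k : ℝ) (hX : 0 < X) : √X * X ^ (-k / 2) = X ^ ((1 - k) / 2) := by
  rw [Real.sqrt_eq_rpow, ← Real.rpow_add hX]
  congr 1
  ring

lemma div_add_mul_sqrt_le (hX : 0 < X) (hY : 0 < Y) : Y / (X + Y) * √X ≤ √(min X Y) := by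
  rw [div_mul_eq_mul_div, div_le_iff₀ (add_pos hX hY)]
  rcases le_total X Y with hXY | hYX
  · rw [min_eq_left hXY, mul_comm]
    gcongr
    exact le_add_of_nonneg_left hX.le
  · rw [min_eq_right hYX]
    calc Y * √X = √Y * (√Y * √X) := by rw [← mul_assoc, Real.mul_self_sqrt hY.le]
      _ ≤ √Y * (√X * √X) := by gcongr
      _ ≤ √Y * (X + Y) := by
          rw [Real.mul_self_sqrt hX.le]
          gcongr
          exact le_add_of_nonneg_right hY.le

lemma div_add_mul_rpow_le_balancedWeight (k : ℝ) (hX : 0 < X) (hY : 0 < Y) :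
    Y / (X + Y) * (X ^ (-(k - 1) / 2) * Y ^ (-k / 2)) ≤ balancedWeight k X Y := by
  calc Y / (X + Y) * (X ^ (-(k - 1) / 2) * Y ^ (-k / 2))
      = Y / (X + Y) * √X * (X * Y) ^ (-k / 2) := by
        rw [neg_sub, ← sqrt_mul_rpow_neg_half k hX, Real.mul_rpow hX.le hY.le]
        ring
    _ ≤ balancedWeight k X Y :=
        mul_le_mul_of_nonneg_right (div_add_mul_sqrt_le hX hY) (by positivity)

lemma inv_sqrt_add_mul_rpow_le_balancedWeight (k : ℝ) (hX : 1 ≤ X) (hY : 1 ≤ Y) :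
    (√(X + Y))⁻¹ * (X ^ (-k / 2) * Y ^ (-k / 2)) ≤ balancedWeight k X Y := by
  have hX0 : 0 ≤ X := zero_le_one.trans hX
  have hY0 : 0 ≤ Y := zero_le_one.trans hY
  have h_inv : (√(X + Y))⁻¹ ≤ 1 := inv_le_one_of_one_le₀ (Real.one_le_sqrt.2 (by linarith))
  have h_min : 1 ≤ √(min X Y) := Real.one_le_sqrt.2 (le_min hX hY)
  rw [balancedWeight, Real.mul_rpow hX0 hY0]
  gcongr
  exact h_inv.trans h_min

lemma balancedWeight_le_decayProfile (hk : 0 ≤ k) (hX : 0 < X) (hXY : X ≤ Y) (hT : T ≤ Y) :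
    balancedWeight k X Y ≤ decayProfile k T X := by
  have hY : 0 < Y := hX.trans_le hXY
  calc balancedWeight k X Y = X ^ ((1 - k) / 2) * Y ^ (-k / 2) := by
        rw [balancedWeight, min_eq_left hXY, Real.mul_rpow hX.le hY.le, ← mul_assoc,
          sqrt_mul_rpow_neg_half k hX]
    _ ≤ decayProfile k T X :=
        mul_le_mul_of_nonneg_left (Real.rpow_le_rpow_of_nonpos (lt_max_of_lt_left hX)
          (max_le hXY hT) (by linarith)) (by positivity)

lemma balancedWeight_le_decayProfile_add (hk : 0 ≤ k) (hX : 0 < X) (hY : 0 < Y)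
    (hT : T ≤ max X Y) : balancedWeight k X Y ≤ decayProfile k T X + decayProfile k T Y := by
  rcases le_total X Y with hXY | hYX
  · rw [max_eq_right hXY] at hT
    exact (balancedWeight_le_decayProfile hk hX hXY hT).trans
      (le_add_of_nonneg_right (decayProfile_nonneg hY.le))
  · rw [max_eq_left hYX] at hT
    rw [balancedWeight_comm]
    exact (balancedWeight_le_decayProfile hk hY hYX hT).trans
      (le_add_of_nonneg_left (decayProfile_nonneg hX.le))

end BalancedWeight

section RadialIntegrability

lemma pow_pred_mul_rpow {n : ℕ} (hn : 0 < n) {y : ℝ} (hy : 0 < y) (γ : ℝ) :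
    y ^ (n - 1) * y ^ γ = y ^ (n - 1 + γ) := by
  rw [← Real.rpow_natCast, ← Real.rpow_add hy, Nat.cast_pred hn]

lemma integrable_norm_rpow_mul_max_rpow {E : Type*} [NormedAddCommGroup E] [NormedSpace ℝ E]
    [FiniteDimensional ℝ E] [MeasurableSpace E] [BorelSpace E] [Nontrivial E]
    (μ : Measure E) [μ.IsAddHaarMeasure] {α β r : ℝ} (hα : -(finrank ℝ E : ℝ) < α)
    (hαβ : α + β < -(finrank ℝ E : ℝ)) (hr : 0 < r) :
    Integrable (fun u : E => ‖u‖ ^ α * max ‖u‖ r ^ β) μ := by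
  have hd : 0 < finrank ℝ E := Module.finrank_pos
  rw [integrable_fun_norm_addHaar μ (f := fun y : ℝ => y ^ α * max y r ^ β),
    ← Set.Ioc_union_Ioi_eq_Ioi hr.le, integrableOn_union]
  constructor
  · have h_rpow : IntegrableOn (fun y : ℝ => y ^ (finrank ℝ E - 1 + α : ℝ)) (Set.Ioc 0 r) := by
      rw [← intervalIntegrable_iff_integrableOn_Ioc_of_le hr.le]
      exact intervalIntegral.intervalIntegrable_rpow' (by linarith)
    refine IntegrableOn.congr_fun (h_rpow.mul_const (r ^ β)) (fun y hy => ?_) measurableSet_Ioc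
    rw [max_eq_right hy.2, smul_eq_mul, ← mul_assoc, pow_pred_mul_rpow hd hy.1]
  · refine IntegrableOn.congr_fun (integrableOn_Ioi_rpow_of_lt
      (a := finrank ℝ E - 1 + (α + β)) (by linarith) hr) (fun y hy => ?_) measurableSet_Ioi
    have hy0 : 0 < y := hr.trans hy
    rw [max_eq_left (Set.mem_Ioi.1 hy).le, smul_eq_mul, ← Real.rpow_add hy0,
      pow_pred_mul_rpow hd hy0]

lemma lintegral_ofReal_inv_pow_mul_comp_inv_smul {E : Type*} [NormedAddCommGroup E]
    [NormedSpace ℝ E] [FiniteDimensional ℝ E] [MeasurableSpace E] [BorelSpace E]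
    (μ : Measure E) [μ.IsAddHaarMeasure] {φ : E → ℝ} (hφ : Integrable φ μ) (hφ0 : 0 ≤ φ)
    {R : ℝ} (hR : 0 < R) :
    ∫⁻ η, ENNReal.ofReal ((R ^ finrank ℝ E)⁻¹ * φ (R⁻¹ • η)) ∂μ
      = ENNReal.ofReal (∫ u, φ u ∂μ) := by
  have h_int : Integrable (fun η => φ (R⁻¹ • η)) μ :=
    (integrable_comp_smul_iff μ φ (inv_ne_zero hR.ne')).2 hφ
  rw [← ofReal_integral_eq_lintegral_ofReal (h_int.const_mul _)
    (.of_forall fun η => mul_nonneg (by positivity) (hφ0 _)), integral_const_mul,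
    Measure.integral_comp_inv_smul_of_nonneg μ φ hR.le, smul_eq_mul,
    inv_mul_cancel_left₀ (by positivity)]

end RadialIntegrability

lemma eLpNorm_two_sq {α ε : Type*} [MeasurableSpace α] [ENorm ε] (f : α → ε) (μ : Measure α) :
    eLpNorm f 2 μ ^ 2 = ∫⁻ x, ‖f x‖ₑ ^ 2 ∂μ := by
  simpa using eLpNorm_nnreal_pow_eq_lintegral (f := f) (μ := μ) (p := 2) two_ne_zero

section FreqKernel

variable {E : Type*} [NormedAddCommGroup E] [NormedSpace ℝ E]

/-- The kernel `|2πξ|^(2k - 1 - d/2) ⟨2πη⟩^(1 - k) (max ⟨2πη⟩ |πξ|)^(-k)` on a space of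
dimension `d`. The power of `|2πξ|` is the one that makes its `L²` norm in `η` scale
invariant when the brackets are replaced by absolute values. -/
def freqKernel (k : ℝ) (ξ η : E) : ℝ :=
  (2 * π * ‖ξ‖) ^ (2 * k - 1 - finrank ℝ E / 2) *
    decayProfile k ((2 * π * ‖ξ‖) ^ 2 / 4) (japSq η)

variable {k : ℝ}

lemma freqKernel_nonneg (k : ℝ) (ξ η : E) : 0 ≤ freqKernel k ξ η :=
  mul_nonneg (by positivity) (decayProfile_nonneg (japSq_pos η).le)

lemma measurable_freqKernel [MeasurableSpace E] [BorelSpace E] (k : ℝ) (ξ : E) :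
    Measurable (freqKernel k ξ) := by
  unfold freqKernel decayProfile japSq
  fun_prop

lemma decayProfile_le_rpow_mul {X R t : ℝ} (hk : 1 ≤ k) (hR : 0 < R) (ht : 0 < t)
    (hX : (R * t) ^ 2 ≤ X) :
    decayProfile k (R ^ 2 / 4) X ≤ R ^ (1 - 2 * k) * (t ^ (1 - k) * max t (1 / 2) ^ (-k)) := by
  have hX0 : 0 < X := lt_of_lt_of_le (by positivity) hX
  have h_max : (R * max t (1 / 2)) ^ 2 ≤ max X (R ^ 2 / 4) := by
    rcases le_total t (1 / 2) with h | h
    · rw [max_eq_right h]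
      exact le_max_of_le_right (by linarith)
    · rw [max_eq_left h]
      exact le_max_of_le_left hX
  have rpow_half_of_sq {z : ℝ} (hz : 0 ≤ z) (s : ℝ) : (z ^ 2) ^ (s / 2) = z ^ s := by
    rw [← Real.rpow_natCast_mul hz]
    congr 1
    push_cast
    ring
  calc decayProfile k (R ^ 2 / 4) X
      ≤ ((R * t) ^ 2) ^ ((1 - k) / 2) * ((R * max t (1 / 2)) ^ 2) ^ (-k / 2) := by
        unfold decayProfile
        gcongr ?_ * ?_
        · exact Real.rpow_le_rpow_of_nonpos (by positivity) hX (by linarith)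
        · exact Real.rpow_le_rpow_of_nonpos (by positivity) h_max (by linarith)
    _ = R ^ (1 - k) * R ^ (-k) * (t ^ (1 - k) * max t (1 / 2) ^ (-k)) := by
        rw [rpow_half_of_sq (by positivity), rpow_half_of_sq (by positivity),
          Real.mul_rpow hR.le ht.le, Real.mul_rpow hR.le (by positivity)]
        ring
    _ = R ^ (1 - 2 * k) * (t ^ (1 - k) * max t (1 / 2) ^ (-k)) := by
        rw [← Real.rpow_add hR]
        ring_nf

lemma freqKernel_le (hk : 1 ≤ k) {ξ η : E} (hξ : ξ ≠ 0) (hη : η ≠ 0) :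
    freqKernel k ξ η ≤ ‖ξ‖ ^ (-(finrank ℝ E / 2 : ℝ)) *
      (‖‖ξ‖⁻¹ • η‖ ^ (1 - k) * max ‖‖ξ‖⁻¹ • η‖ (1 / 2) ^ (-k)) := by
  have hξ_pos : 0 < ‖ξ‖ := norm_pos_iff.2 hξ
  have hη_pos : 0 < ‖‖ξ‖⁻¹ • η‖ := norm_pos_iff.2 (smul_ne_zero (inv_ne_zero hξ_pos.ne') hη)
  have h_scale : 2 * π * ‖ξ‖ * ‖‖ξ‖⁻¹ • η‖ = 2 * π * ‖η‖ := by
    rw [norm_smul, norm_inv, norm_norm]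
    field_simp
  set R := 2 * π * ‖ξ‖
  set t := ‖‖ξ‖⁻¹ • η‖
  have hR : 0 < R := by positivity
  have h_le : ‖ξ‖ ≤ R := le_mul_of_one_le_left hξ_pos.le (by linarith [Real.pi_gt_three])
  calc freqKernel k ξ η
      ≤ R ^ (2 * k - 1 - finrank ℝ E / 2) *
          (R ^ (1 - 2 * k) * (t ^ (1 - k) * max t (1 / 2) ^ (-k))) :=
        mul_le_mul_of_nonneg_left
          (decayProfile_le_rpow_mul hk hR hη_pos (h_scale ▸ sq_le_japSq η)) (by positivity)
    _ = R ^ (-(finrank ℝ E / 2 : ℝ)) * (t ^ (1 - k) * max t (1 / 2) ^ (-k)) := by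
        rw [← mul_assoc, ← Real.rpow_add hR]
        ring_nf
    _ ≤ ‖ξ‖ ^ (-(finrank ℝ E / 2 : ℝ)) * (t ^ (1 - k) * max t (1 / 2) ^ (-k)) := by
        gcongr ?_ * _
        exact Real.rpow_le_rpow_of_nonpos hξ_pos h_le (neg_nonpos.2 (by positivity))

lemma freqKernel_sq_le (hk : 1 ≤ k) {ξ η : E} (hξ : ξ ≠ 0) (hη : η ≠ 0) :
    freqKernel k ξ η ^ 2 ≤ (‖ξ‖ ^ finrank ℝ E)⁻¹ *
      (‖‖ξ‖⁻¹ • η‖ ^ (2 - 2 * k) * max ‖‖ξ‖⁻¹ • η‖ (1 / 2) ^ (-2 * k)) := by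
  have sq_rpow {z : ℝ} (hz : 0 ≤ z) (s : ℝ) : (z ^ s) ^ 2 = z ^ (2 * s) := by
    rw [← Real.rpow_natCast, ← Real.rpow_mul hz, mul_comm, Nat.cast_ofNat]
  refine (pow_le_pow_left₀ (freqKernel_nonneg k ξ η) (freqKernel_le hk hξ hη) 2).trans_eq ?_
  rw [mul_pow, mul_pow, sq_rpow (norm_nonneg _), sq_rpow (norm_nonneg _), sq_rpow (by positivity),
    ← Real.rpow_natCast, ← Real.rpow_neg (norm_nonneg _)]
  ring_nf

lemma exists_eLpNorm_freqKernel_le [FiniteDimensional ℝ E] [MeasurableSpace E] [BorelSpace E]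
    (μ : Measure E) [μ.IsAddHaarMeasure] (hk : 1 ≤ k) (hlow : finrank ℝ E + 2 < 4 * k)
    (hhigh : 2 * k < finrank ℝ E + 2) :
    ∃ K : ℝ≥0, ∀ ξ : E, eLpNorm (freqKernel k ξ) 2 μ ≤ K := by
  have : Nontrivial E := by
    rw [← Module.finrank_pos_iff (R := ℝ), ← Nat.cast_pos (α := ℝ)]
    linarith
  let φ : E → ℝ := fun u => ‖u‖ ^ (2 - 2 * k) * max ‖u‖ (1 / 2) ^ (-2 * k)
  have hφ : Integrable φ μ :=
    integrable_norm_rpow_mul_max_rpow μ (by linarith) (by linarith) (by norm_num)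
  have hφ0 : 0 ≤ φ := fun u => by positivity
  refine ⟨Real.toNNReal √(∫ u, φ u ∂μ), fun ξ => ?_⟩
  rcases eq_or_ne ξ 0 with rfl | hξ
  · have h_zero : freqKernel k (0 : E) = 0 := by
      ext η
      simp [freqKernel, Real.zero_rpow (by linarith : 2 * k - 1 - (finrank ℝ E : ℝ) / 2 ≠ 0)]
    simp [h_zero]
  rw [← ENNReal.pow_le_pow_left_iff two_ne_zero, eLpNorm_two_sq]
  calc ∫⁻ η, ‖freqKernel k ξ η‖ₑ ^ 2 ∂μ
      ≤ ∫⁻ η, ENNReal.ofReal ((‖ξ‖ ^ finrank ℝ E)⁻¹ * φ (‖ξ‖⁻¹ • η)) ∂μ := by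
        refine lintegral_mono_ae ?_
        filter_upwards [Measure.ae_ne μ (0 : E)] with η hη
        rw [Real.enorm_of_nonneg (freqKernel_nonneg k ξ η),
          ← ENNReal.ofReal_pow (freqKernel_nonneg k ξ η)]
        exact ENNReal.ofReal_le_ofReal (freqKernel_sq_le hk hξ hη)
    _ = ENNReal.ofReal (∫ u, φ u ∂μ) :=
        lintegral_ofReal_inv_pow_mul_comp_inv_smul μ hφ hφ0 (norm_pos_iff.2 hξ)
    _ = (Real.toNNReal √(∫ u, φ u ∂μ) : ℝ≥0∞) ^ 2 := by
        rw [← ENNReal.ofReal, ← ENNReal.ofReal_pow (Real.sqrt_nonneg _),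
          Real.sq_sqrt (integral_nonneg hφ0)]

end FreqKernel

section KernelConv

lemma lintegral_mul_le_eLpNorm_two_mul {α : Type*} [MeasurableSpace α] {μ : Measure α}
    {f g : α → ℝ≥0∞} (hf : AEMeasurable f μ) (hg : AEMeasurable g μ) :
    ∫⁻ x, f x * g x ∂μ ≤ eLpNorm f 2 μ * eLpNorm g 2 μ := by
  simpa [eLpNorm_eq_lintegral_rpow_enorm_toReal] using
    ENNReal.lintegral_mul_le_Lp_mul_Lq μ Real.HolderConjugate.two_two hf hg

variable {G : Type*} [AddGroup G] [MeasurableSpace G] [MeasurableSub₂ G]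

/-- The bilinear convolution-type operator with kernel `M`; for `M = 1` it is the convolution of
the nonnegative functions `p` and `q`. -/
def kernelConv (μ : Measure G) (M : G → G → ℝ≥0∞) (p q : G → ℝ≥0∞) (ξ : G) : ℝ≥0∞ :=
  ∫⁻ η, M ξ η * (p (ξ - η) * q η) ∂μ

variable {μ : Measure G} [SFinite μ] {M : G → G → ℝ≥0∞} {p q : G → ℝ≥0∞}

lemma measurable_kernelConv (hM : Measurable (Function.uncurry M)) (hp : Measurable p)
    (hq : Measurable q) : Measurable (kernelConv μ M p q) :=
  Measurable.lintegral_prod_right (f := fun ξ η => M ξ η * (p (ξ - η) * q η)) (by fun_prop)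

variable [MeasurableAdd G] [μ.IsAddRightInvariant]

lemma lintegral_lintegral_sub_mul_sq (hp : Measurable p) (hq : Measurable q) :
    ∫⁻ ξ, ∫⁻ η, (p (ξ - η) * q η) ^ 2 ∂μ ∂μ = (∫⁻ x, p x ^ 2 ∂μ) * ∫⁻ x, q x ^ 2 ∂μ := by
  have h_inner (η : G) :
      ∫⁻ ξ, (p (ξ - η) * q η) ^ 2 ∂μ = (∫⁻ x, p x ^ 2 ∂μ) * q η ^ 2 := by
    simp_rw [mul_pow]
    rw [lintegral_mul_const _ (by fun_prop), lintegral_sub_right_eq_self (fun x => p x ^ 2) η]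
  rw [lintegral_lintegral_swap (by unfold Function.uncurry; fun_prop)]
  simp_rw [h_inner]
  exact lintegral_const_mul _ (by fun_prop)

lemma eLpNorm_kernelConv_le (hM : ∀ ξ, Measurable (M ξ)) (hp : Measurable p) (hq : Measurable q)
    {K : ℝ≥0} (hK : ∀ ξ, eLpNorm (M ξ) 2 μ ≤ K) :
    eLpNorm (kernelConv μ M p q) 2 μ ≤ K * eLpNorm p 2 μ * eLpNorm q 2 μ := by
  have h_cauchy_schwarz (ξ : G) :
      kernelConv μ M p q ξ ^ 2 ≤ K ^ 2 * ∫⁻ η, (p (ξ - η) * q η) ^ 2 ∂μ := by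
    calc kernelConv μ M p q ξ ^ 2
        ≤ (eLpNorm (M ξ) 2 μ * eLpNorm (fun η => p (ξ - η) * q η) 2 μ) ^ 2 := by
          gcongr
          exact lintegral_mul_le_eLpNorm_two_mul (hM ξ).aemeasurable (by fun_prop)
      _ ≤ (K * eLpNorm (fun η => p (ξ - η) * q η) 2 μ) ^ 2 := by
          gcongr
          exact hK ξ
      _ = K ^ 2 * ∫⁻ η, (p (ξ - η) * q η) ^ 2 ∂μ := by
          rw [mul_pow, eLpNorm_two_sq]
          simp only [enorm_eq_self]
  rw [← ENNReal.pow_le_pow_left_iff two_ne_zero, mul_pow, mul_pow]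
  simp only [eLpNorm_two_sq, enorm_eq_self]
  calc ∫⁻ ξ, kernelConv μ M p q ξ ^ 2 ∂μ
      ≤ ∫⁻ ξ, K ^ 2 * ∫⁻ η, (p (ξ - η) * q η) ^ 2 ∂μ ∂μ := lintegral_mono h_cauchy_schwarz
    _ = K ^ 2 * (∫⁻ x, p x ^ 2 ∂μ) * ∫⁻ x, q x ^ 2 ∂μ := by
        rw [lintegral_const_mul' _ _ (by simp), lintegral_lintegral_sub_mul_sq hp hq, mul_assoc]

end KernelConv

section SobolevWeight

variable {E : Type*} [NormedAddCommGroup E]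

/-- The weighted modulus `⟨2πξ⟩^s |f ξ|`, whose `L²` norm is the Sobolev norm of order `s` of the
inverse Fourier transform of `f`. -/
def sobolevWeight (s : ℝ) (f : E → ℂ) (ξ : E) : ℝ≥0∞ :=
  ENNReal.ofReal (japSq ξ ^ (s / 2)) * ‖f ξ‖ₑ

lemma measurable_sobolevWeight [MeasurableSpace E] [BorelSpace E] (s : ℝ) {f : E → ℂ}
    (hf : Measurable f) : Measurable (sobolevWeight s f) := by
  have h_japSq : Measurable (japSq : E → ℝ) := continuous_japSq.measurable
  unfold sobolevWeight
  fun_prop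

lemma enorm_eq_mul_sobolevWeight (s : ℝ) (f : E → ℂ) (ξ : E) :
    ‖f ξ‖ₑ = ENNReal.ofReal (japSq ξ ^ (-s / 2)) * sobolevWeight s f ξ := by
  rw [sobolevWeight, ← mul_assoc, ← ENNReal.ofReal_mul (Real.rpow_nonneg (japSq_pos ξ).le _),
    ← Real.rpow_add (japSq_pos ξ), ← add_div, neg_add_cancel, zero_div, Real.rpow_zero,
    ENNReal.ofReal_one, one_mul]

lemma enorm_mul_mul_le_sobolevWeight {f g : E → ℂ} {s t w : ℝ} {x y : E} {z : ℂ}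
    (hw : ‖z‖ * (japSq x ^ (-s / 2) * japSq y ^ (-t / 2)) ≤ w) :
    ‖f x * g y * z‖ₑ ≤ ENNReal.ofReal w * (sobolevWeight s f x * sobolevWeight t g y) := by
  have hx : 0 ≤ japSq x ^ (-s / 2) := Real.rpow_nonneg (japSq_pos x).le _
  calc ‖f x * g y * z‖ₑ
      = ENNReal.ofReal (‖z‖ * (japSq x ^ (-s / 2) * japSq y ^ (-t / 2))) *
          (sobolevWeight s f x * sobolevWeight t g y) := by
        rw [enorm_mul, enorm_mul, enorm_eq_mul_sobolevWeight s f, enorm_eq_mul_sobolevWeight t g,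
          ENNReal.ofReal_mul (norm_nonneg z), ENNReal.ofReal_mul hx, ofReal_norm]
        ring
    _ ≤ ENNReal.ofReal w * (sobolevWeight s f x * sobolevWeight t g y) := by gcongr

end SobolevWeight

lemma eLpNorm_comp_sub_left_add_le {G : Type*} [AddCommGroup G] [MeasurableSpace G]
    [MeasurableAdd₂ G] [MeasurableNeg G] {μ : Measure G} [μ.IsNegInvariant]
    [μ.IsAddLeftInvariant] {p : ℝ≥0∞} (hp : 1 ≤ p) {f : G → ℝ≥0∞} (hf : Measurable f) (x : G) :
    eLpNorm (fun y => f (x - y) + f y) p μ ≤ eLpNorm f p μ + eLpNorm f p μ := by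
  have h_refl : MeasurePreserving (fun y => x - y) μ μ := Measure.measurePreserving_sub_left μ x
  calc eLpNorm (fun y => f (x - y) + f y) p μ
      ≤ eLpNorm (fun y => f (x - y)) p μ + eLpNorm f p μ :=
        eLpNorm_add_le (hf.comp h_refl.measurable).aestronglyMeasurable
          hf.aestronglyMeasurable hp
    _ = eLpNorm f p μ + eLpNorm f p μ :=
        congrArg (· + eLpNorm f p μ)
          (eLpNorm_comp_measurePreserving hf.aestronglyMeasurable h_refl)

section SymmFreqKernel

variable {E : Type*} [NormedAddCommGroup E] [NormedSpace ℝ E] {k : ℝ}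

/-- The sum of the values of `freqKernel k ξ` at the two frequencies `ξ - η` and `η` that interact
to produce `ξ`. -/
def symmFreqKernel (k : ℝ) (ξ η : E) : ℝ≥0∞ :=
  ENNReal.ofReal (freqKernel k ξ (ξ - η)) + ENNReal.ofReal (freqKernel k ξ η)

lemma ofReal_rpow_mul_balancedWeight_le (hk : 0 ≤ k) (ξ η : E) :
    ENNReal.ofReal ((2 * π * ‖ξ‖) ^ (2 * k - 1 - finrank ℝ E / 2)) *
        ENNReal.ofReal (balancedWeight k (japSq (ξ - η)) (japSq η)) ≤ symmFreqKernel k ξ η := by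
  rw [symmFreqKernel, ← ENNReal.ofReal_mul (by positivity),
    ← ENNReal.ofReal_add (freqKernel_nonneg k ξ _) (freqKernel_nonneg k ξ _), freqKernel,
    freqKernel, ← mul_add]
  gcongr
  exact balancedWeight_le_decayProfile_add hk (japSq_pos _) (japSq_pos _)
    (sq_div_four_le_max_japSq ξ η)

variable [MeasurableSpace E] [BorelSpace E] [FiniteDimensional ℝ E]

lemma measurable_uncurry_symmFreqKernel (k : ℝ) :
    Measurable (Function.uncurry (symmFreqKernel k : E → E → ℝ≥0∞)) := by
  unfold Function.uncurry symmFreqKernel freqKernel decayProfile japSq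
  fun_prop

lemma exists_eLpNorm_symmFreqKernel_le (μ : Measure E) [μ.IsAddHaarMeasure] (hk : 1 ≤ k)
    (hlow : finrank ℝ E + 2 < 4 * k) (hhigh : 2 * k < finrank ℝ E + 2) :
    ∃ K : ℝ≥0, ∀ ξ : E, eLpNorm (symmFreqKernel k ξ) 2 μ ≤ K := by
  obtain ⟨K, hK⟩ := exists_eLpNorm_freqKernel_le μ hk hlow hhigh
  refine ⟨K + K, fun ξ => ?_⟩
  have h_eq : eLpNorm (fun η => ENNReal.ofReal (freqKernel k ξ η)) 2 μ =
      eLpNorm (freqKernel k ξ) 2 μ :=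
    eLpNorm_congr_enorm_ae (.of_forall fun η => by
      rw [enorm_eq_self, Real.enorm_of_nonneg (freqKernel_nonneg k ξ η)])
  refine (eLpNorm_comp_sub_left_add_le one_le_two
    (measurable_freqKernel k ξ).ennreal_ofReal ξ).trans ?_
  rw [h_eq, ENNReal.coe_add]
  exact add_le_add (hK ξ) (hK ξ)

end SymmFreqKernel

section BilinearEstimate

variable {E : Type*} [NormedAddCommGroup E] {k : ℝ}

lemma enorm_mul_one_sub_freqSplit_le (k : ℝ) (f g : E → ℂ) (ξ η : E) :
    ‖f (ξ - η) * g η * ((1 - freqSplit ξ η : ℝ) : ℂ)‖ₑ ≤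
      ENNReal.ofReal (balancedWeight k (japSq (ξ - η)) (japSq η)) *
        (sobolevWeight (k - 1) f (ξ - η) * sobolevWeight k g η) := by
  refine enorm_mul_mul_le_sobolevWeight ?_
  rw [Complex.norm_real, Real.norm_of_nonneg (one_sub_freqSplit_nonneg ξ η), one_sub_freqSplit]
  exact div_add_mul_rpow_le_balancedWeight k (japSq_pos _) (japSq_pos _)

lemma enorm_mul_freqSplit_le (k : ℝ) (f g : E → ℂ) (ξ η : E) :
    ‖f (ξ - η) * g η * (freqSplit ξ η : ℂ)‖ₑ ≤
      ENNReal.ofReal (balancedWeight k (japSq (ξ - η)) (japSq η)) *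
        (sobolevWeight k f (ξ - η) * sobolevWeight (k - 1) g η) := by
  refine enorm_mul_mul_le_sobolevWeight ?_
  rw [Complex.norm_real, Real.norm_of_nonneg (freqSplit_nonneg ξ η), freqSplit, balancedWeight_comm,
    add_comm, mul_comm (_ ^ (-k / 2))]
  exact div_add_mul_rpow_le_balancedWeight k (japSq_pos _) (japSq_pos _)

variable [InnerProductSpace ℝ E]

lemma enorm_mul_fderiv_freqSplit_le (k : ℝ) (f g : E → ℂ) {e : E} (he : ‖e‖ ≤ 1) (ξ η : E) :
    ‖f (ξ - η) * g η * (fderiv ℝ (freqSplit ξ) η e : ℂ)‖ₑ ≤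
      ENNReal.ofReal (balancedWeight k (japSq (ξ - η)) (japSq η)) *
        (ENNReal.ofReal (4 * π) * (sobolevWeight k f (ξ - η) * sobolevWeight k g η)) := by
  have h_deriv : ‖fderiv ℝ (freqSplit ξ) η e‖ ≤ 4 * π * (√(japSq (ξ - η) + japSq η))⁻¹ := by
    rw [← div_eq_mul_inv]
    exact ((fderiv ℝ (freqSplit ξ) η).unit_le_opNorm e he).trans (norm_fderiv_freqSplit_le ξ η)
  rw [← mul_assoc, mul_comm (ENNReal.ofReal (balancedWeight _ _ _)),
    ← ENNReal.ofReal_mul (by positivity)]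
  refine enorm_mul_mul_le_sobolevWeight ?_
  rw [Complex.norm_real]
  refine (mul_le_mul_of_nonneg_right h_deriv (mul_nonneg (Real.rpow_nonneg (japSq_pos _).le _)
    (Real.rpow_nonneg (japSq_pos _).le _))).trans ?_
  rw [mul_assoc]
  gcongr
  exact inv_sqrt_add_mul_rpow_le_balancedWeight k (one_le_japSq _) (one_le_japSq _)

variable [MeasurableSpace E] [BorelSpace E]

lemma measurable_sobolevWeight_schwartz (s : ℝ) (f : 𝓢(E, ℂ)) : Measurable (sobolevWeight s f) :=
  measurable_sobolevWeight s f.continuous.measurable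

variable [FiniteDimensional ℝ E]

/-- The `L²` norm of `⟨2πξ⟩^s f`, that is, the Sobolev norm of order `s` on the Fourier side. -/
def weightedNorm (s : ℝ) (f : E → ℂ) : ℝ≥0∞ := eLpNorm (sobolevWeight s f) 2 volume

lemma enorm_integral_lineDeriv_mul_le (k : ℝ) (a b : 𝓢(E, ℂ)) {e : E} (he : ‖e‖ ≤ 1) (ξ : E) :
    ‖∫ η, (∂_{e} a) (ξ - η) * b η‖ₑ ≤
      ∫⁻ η, ENNReal.ofReal (balancedWeight k (japSq (ξ - η)) (japSq η)) *
        (sobolevWeight (k - 1) (∂_{e} a : 𝓢(E, ℂ)) (ξ - η) * sobolevWeight k b η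
        + sobolevWeight k a (ξ - η) * sobolevWeight (k - 1) (∂_{e} b : 𝓢(E, ℂ)) η
        + ENNReal.ofReal (4 * π) * (sobolevWeight k a (ξ - η) * sobolevWeight k b η)) := by
  rw [integral_lineDeriv_mul_eq a b (contDiff_freqSplit ξ) (abs_freqSplit_le_one ξ)
    (norm_fderiv_freqSplit_le_const ξ) e ξ]
  refine (enorm_integral_le_lintegral_enorm _).trans (lintegral_mono fun η => ?_)
  dsimp only
  rw [mul_add, mul_add]
  refine (enorm_add_le _ _).trans (add_le_add ((enorm_add_le _ _).trans (add_le_add ?_ ?_)) ?_)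
  · exact enorm_mul_one_sub_freqSplit_le k _ _ ξ η
  · exact enorm_mul_freqSplit_le k _ _ ξ η
  · exact enorm_mul_fderiv_freqSplit_le k _ _ he ξ η

lemma ofReal_rpow_mul_enorm_integral_lineDeriv_mul_le (hk : 0 ≤ k) (a b : 𝓢(E, ℂ)) {e : E}
    (he : ‖e‖ ≤ 1) (ξ : E) :
    ENNReal.ofReal ((2 * π * ‖ξ‖) ^ (2 * k - 1 - finrank ℝ E / 2)) *
        ‖∫ η, (∂_{e} a) (ξ - η) * b η‖ₑ ≤
      kernelConv volume (symmFreqKernel k) (sobolevWeight (k - 1) (∂_{e} a : 𝓢(E, ℂ)))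
        (sobolevWeight k b) ξ
      + kernelConv volume (symmFreqKernel k) (sobolevWeight k a)
        (sobolevWeight (k - 1) (∂_{e} b : 𝓢(E, ℂ))) ξ
      + ENNReal.ofReal (4 * π) *
        kernelConv volume (symmFreqKernel k) (sobolevWeight k a) (sobolevWeight k b) ξ := by
  have hM : Measurable (symmFreqKernel k ξ) :=
    (measurable_uncurry_symmFreqKernel k).of_uncurry_left
  have hW := measurable_sobolevWeight_schwartz (E := E)
  refine (mul_le_mul_right (enorm_integral_lineDeriv_mul_le k a b he ξ) _).trans ?_
  rw [← lintegral_const_mul' _ _ ENNReal.ofReal_ne_top]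
  calc _ ≤ ∫⁻ η, symmFreqKernel k ξ η *
        (sobolevWeight (k - 1) (∂_{e} a : 𝓢(E, ℂ)) (ξ - η) * sobolevWeight k b η
        + sobolevWeight k a (ξ - η) * sobolevWeight (k - 1) (∂_{e} b : 𝓢(E, ℂ)) η
        + ENNReal.ofReal (4 * π) * (sobolevWeight k a (ξ - η) * sobolevWeight k b η)) := by
        refine lintegral_mono fun η => ?_
        dsimp only
        rw [← mul_assoc]
        gcongr
        exact ofReal_rpow_mul_balancedWeight_le hk ξ η
    _ = _ := by
        simp only [kernelConv, mul_add, mul_left_comm _ (ENNReal.ofReal (4 * π))]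
        rw [lintegral_add_left (by fun_prop), lintegral_add_left (by fun_prop),
          lintegral_const_mul' _ _ ENNReal.ofReal_ne_top]

lemma eLpNorm_add_add_const_mul_le {α : Type*} [MeasurableSpace α] {μ : Measure α}
    {p : ℝ≥0∞} (hp : 1 ≤ p) {f g h : α → ℝ≥0∞} (hf : Measurable f) (hg : Measurable g)
    (hh : Measurable h) (c : ℝ≥0) :
    eLpNorm (fun x => f x + g x + c * h x) p μ ≤
      eLpNorm f p μ + eLpNorm g p μ + c * eLpNorm h p μ := by
  have h_const : eLpNorm (fun x => c * h x) p μ ≤ c * eLpNorm h p μ :=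
    eLpNorm_le_mul_eLpNorm_of_ae_le_mul' (.of_forall fun x => by simp) p
  calc eLpNorm (fun x => f x + g x + c * h x) p μ
      ≤ eLpNorm (fun x => f x + g x) p μ + eLpNorm (fun x => c * h x) p μ :=
        eLpNorm_add_le (hf.add hg).aestronglyMeasurable
          (hh.const_mul _).aestronglyMeasurable hp
    _ ≤ eLpNorm f p μ + eLpNorm g p μ + c * eLpNorm h p μ :=
        add_le_add (eLpNorm_add_le hf.aestronglyMeasurable hg.aestronglyMeasurable hp) h_const

lemma exists_eLpNorm_rpow_mul_integral_lineDeriv_mul_le (hk : 1 ≤ k)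
    (hlow : finrank ℝ E + 2 < 4 * k) (hhigh : 2 * k < finrank ℝ E + 2) :
    ∃ K : ℝ≥0, ∀ (a b : 𝓢(E, ℂ)) (e : E), ‖e‖ ≤ 1 →
      eLpNorm (fun ξ => (((2 * π * ‖ξ‖) ^ (2 * k - 1 - finrank ℝ E / 2) : ℝ) : ℂ) *
        ∫ η, (∂_{e} a) (ξ - η) * b η) 2 volume ≤
      K * (weightedNorm (k - 1) (∂_{e} a : 𝓢(E, ℂ)) * weightedNorm k b
        + weightedNorm k a * weightedNorm (k - 1) (∂_{e} b : 𝓢(E, ℂ))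
        + ENNReal.ofReal (4 * π) * (weightedNorm k a * weightedNorm k b)) := by
  obtain ⟨K, hK⟩ := exists_eLpNorm_symmFreqKernel_le (volume : Measure E) hk hlow hhigh
  refine ⟨K, fun a b e he => ?_⟩
  have hM : Measurable (Function.uncurry (symmFreqKernel k : E → E → ℝ≥0∞)) :=
    measurable_uncurry_symmFreqKernel k
  have hW := measurable_sobolevWeight_schwartz (E := E)
  have h_meas (s t : ℝ) (f g : 𝓢(E, ℂ)) :
      Measurable (kernelConv volume (symmFreqKernel k) (sobolevWeight s f) (sobolevWeight t g)) :=
    measurable_kernelConv hM (hW s f) (hW t g)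
  have h_conv (s t : ℝ) (f g : 𝓢(E, ℂ)) :
      eLpNorm (kernelConv volume (symmFreqKernel k) (sobolevWeight s f) (sobolevWeight t g)) 2
        volume ≤ K * (weightedNorm s f * weightedNorm t g) :=
    (eLpNorm_kernelConv_le (fun ξ => hM.of_uncurry_left) (hW s f) (hW t g) hK).trans_eq
      (mul_assoc _ _ _)
  refine (eLpNorm_mono_enorm fun ξ => ?_).trans ((eLpNorm_add_add_const_mul_le one_le_two
    (h_meas (k - 1) k (∂_{e} a) b) (h_meas k (k - 1) a (∂_{e} b)) (h_meas k k a b)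
    (Real.toNNReal (4 * π))).trans ?_)
  · rw [enorm_mul, enorm_eq_self, ← ofReal_norm (_ : ℂ), Complex.norm_real,
      Real.norm_of_nonneg (by positivity)]
    exact ofReal_rpow_mul_enorm_integral_lineDeriv_mul_le (zero_le_one.trans hk) a b he ξ
  · rw [mul_add, mul_add, mul_left_comm (K : ℝ≥0∞) (ENNReal.ofReal (4 * π))]
    exact add_le_add (add_le_add (h_conv _ _ _ _) (h_conv _ _ _ _))
      (mul_le_mul_right (h_conv _ _ _ _) _)

end BilinearEstimate

section FourierMultiplier

variable {E : Type*} [NormedAddCommGroup E] [InnerProductSpace ℝ E] [FiniteDimensional ℝ E]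
  [MeasurableSpace E] [BorelSpace E] {m : E → ℝ} {r : ℝ}

/-- The Fourier multiplier operator with real symbol `m`. -/
def fourierMul (m : E → ℝ) (f : E → ℂ) : E → ℂ := 𝓕⁻ (fun ξ => (m ξ : ℂ) * 𝓕 f ξ)

lemma memLp_ofReal_mul (f : 𝓢(E, ℂ)) (hm : Measurable m) (hmr : ∀ ξ, |m ξ| ≤ japSq ξ ^ r)
    (p : ℝ≥0∞) : MemLp (fun ξ => (m ξ : ℂ) * f ξ) p volume := by
  refine ((SchwartzMap.smulLeftCLM ℂ (fun ξ : E => japSq ξ ^ r) f).memLp p volume).mono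
    ((Complex.measurable_ofReal.comp hm).mul f.continuous.measurable).aestronglyMeasurable
    (.of_forall fun ξ => ?_)
  rw [SchwartzMap.smulLeftCLM_apply_apply (hasTemperateGrowth_japSq_rpow r), norm_mul, norm_smul,
    Complex.norm_real, Real.norm_of_nonneg (Real.rpow_nonneg (japSq_pos ξ).le r)]
  gcongr
  exact hmr ξ

lemma eLpNorm_fourierMul (f : 𝓢(E, ℂ)) (hm : Measurable m) (hmr : ∀ ξ, |m ξ| ≤ japSq ξ ^ r) :
    eLpNorm (fourierMul m f) 2 volume = eLpNorm (fun ξ => (m ξ : ℂ) * 𝓕 f ξ) 2 volume :=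
  eLpNorm_fourierInv (memLp_one_iff_integrable.1 (memLp_ofReal_mul (𝓕 f) hm hmr 1))
    (memLp_ofReal_mul (𝓕 f) hm hmr 2)

lemma eLpNorm_fourierMul_japSq_rpow (s : ℝ) (f : 𝓢(E, ℂ)) :
    eLpNorm (fourierMul (fun ξ => japSq ξ ^ (s / 2)) f) 2 volume =
      weightedNorm s (𝓕 f : 𝓢(E, ℂ)) := by
  have h_nonneg (ξ : E) : 0 ≤ japSq ξ ^ (s / 2) := Real.rpow_nonneg (japSq_pos ξ).le _
  rw [eLpNorm_fourierMul f (continuous_japSq.measurable.pow_const _)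
    fun ξ => (abs_of_nonneg (h_nonneg ξ)).le]
  refine eLpNorm_congr_enorm_ae (.of_forall fun ξ => ?_)
  rw [enorm_mul, enorm_eq_self, sobolevWeight, ← ofReal_norm (_ : ℂ), Complex.norm_real,
    Real.norm_of_nonneg (h_nonneg ξ)]

end FourierMultiplier

section DirectionalNorm

variable {E : Type*} [NormedAddCommGroup E] [InnerProductSpace ℝ E] [FiniteDimensional ℝ E]
  [MeasurableSpace E] [BorelSpace E] {k : ℝ}

/-- The analogue of the `V^k` norm in which multiplication by the vector `x` is replaced by
multiplication by its component `⟨x, e⟩`. -/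
def directionalVNorm (k : ℝ) (e : E) (f : E → ℂ) : ℝ≥0∞ :=
  eLpNorm (fourierMul (fun ξ => japSq ξ ^ (k / 2)) f) 2 volume ⊔
    eLpNorm (fourierMul (fun ξ => japSq ξ ^ ((k - 1) / 2)) fun x => (inner ℝ x e : ℂ) * f x) 2
      volume

lemma weightedNorm_fourier_le_directionalVNorm (k : ℝ) (e : E) (v : 𝓢(E, ℂ)) :
    weightedNorm k (𝓕 v : 𝓢(E, ℂ)) ≤ directionalVNorm k e v := by
  rw [← eLpNorm_fourierMul_japSq_rpow]
  exact le_sup_left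

lemma weightedNorm_lineDeriv_fourier_le_directionalVNorm (k : ℝ) (e : E) (v : 𝓢(E, ℂ)) :
    weightedNorm (k - 1) (∂_{e} (𝓕 v) : 𝓢(E, ℂ)) ≤
      ENNReal.ofReal (2 * π) * directionalVNorm k e v := by
  set w := SchwartzMap.smulLeftCLM ℂ (inner ℝ · e) v
  have hw_coe : ⇑w = fun x => (inner ℝ x e : ℂ) * v x := funext (smulLeftCLM_inner_apply v e)
  have h_enorm (ξ : E) : ‖(∂_{e} (𝓕 v) : 𝓢(E, ℂ)) ξ‖ₑ =
      ENNReal.ofReal (2 * π) * ‖(𝓕 w : 𝓢(E, ℂ)) ξ‖ₑ := by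
    rw [lineDeriv_fourier_apply, enorm_mul, ← ofReal_norm (-_)]
    simp [w, abs_of_pos Real.pi_pos]
  calc weightedNorm (k - 1) (∂_{e} (𝓕 v) : 𝓢(E, ℂ))
      ≤ ENNReal.ofReal (2 * π) * weightedNorm (k - 1) (𝓕 w : 𝓢(E, ℂ)) := by
        refine eLpNorm_le_mul_eLpNorm_of_ae_le_mul' (c := Real.toNNReal (2 * π))
          (.of_forall fun ξ => ?_) 2
        simp only [enorm_eq_self, sobolevWeight, h_enorm]
        exact (mul_left_comm _ _ _).le
    _ ≤ ENNReal.ofReal (2 * π) * directionalVNorm k e v := by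
        rw [← eLpNorm_fourierMul_japSq_rpow, hw_coe]
        gcongr
        exact le_sup_right

lemma fourier_inner_mul_mul_eq_integral (v₁ v₂ : 𝓢(E, ℂ)) (e ξ : E) :
    𝓕 (fun x => (inner ℝ x e : ℂ) * v₁ x * v₂ x) ξ =
      -(2 * π * I)⁻¹ * ∫ η, (∂_{e} (𝓕 v₁) : 𝓢(E, ℂ)) (ξ - η) * (𝓕 v₂ : 𝓢(E, ℂ)) η := by
  simp only [← smulLeftCLM_inner_apply, fourier_mul_eq_integral, lineDeriv_fourier_apply, mul_assoc,
    integral_const_mul]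
  field_simp

lemma eLpNorm_fourierMul_rpow_inner_mul_mul {s : ℝ} (hs : 0 ≤ s) (v₁ v₂ : 𝓢(E, ℂ)) (e : E) :
    eLpNorm (fourierMul (fun ξ => (2 * π * ‖ξ‖) ^ s) fun x => (inner ℝ x e : ℂ) * v₁ x * v₂ x) 2
        volume =
      ENNReal.ofReal (2 * π)⁻¹ * eLpNorm (fun ξ => (((2 * π * ‖ξ‖) ^ s : ℝ) : ℂ) *
        ∫ η, (∂_{e} (𝓕 v₁) : 𝓢(E, ℂ)) (ξ - η) * (𝓕 v₂ : 𝓢(E, ℂ)) η) 2 volume := by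
  have h_coe : (fun x => (inner ℝ x e : ℂ) * v₁ x * v₂ x) = SchwartzMap.pairing
      (ContinuousLinearMap.mul ℂ ℂ) (SchwartzMap.smulLeftCLM ℂ (inner ℝ · e) v₁) v₂ := by
    ext x
    rw [SchwartzMap.pairing_apply_apply, ContinuousLinearMap.mul_apply', smulLeftCLM_inner_apply]
  have h_enorm : ‖-(2 * π * I : ℂ)⁻¹‖ₑ = ENNReal.ofReal (2 * π)⁻¹ := by
    rw [← ofReal_norm]
    simp [abs_of_pos Real.pi_pos]
  rw [h_coe, eLpNorm_fourierMul _ (by fun_prop) (abs_rpow_le_japSq_rpow hs),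
    SchwartzMap.fourier_coe, ← h_coe, ← h_enorm, ← eLpNorm_const_smul]
  simp only [fourier_inner_mul_mul_eq_integral, Pi.smul_def, smul_eq_mul, mul_left_comm]

theorem stmt_10_general (hk : 1 ≤ k) (hlow : finrank ℝ E + 2 < 4 * k)
    (hhigh : 2 * k < finrank ℝ E + 2) :
    ∃ C : ℝ, 0 < C ∧ ∀ (v₁ v₂ : 𝓢(E, ℂ)) (e : E), ‖e‖ ≤ 1 →
      eLpNorm (fourierMul (fun ξ => (2 * π * ‖ξ‖) ^ (2 * k - 1 - finrank ℝ E / 2))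
        fun x => (inner ℝ x e : ℂ) * v₁ x * v₂ x) 2 volume
        ≤ ENNReal.ofReal C * directionalVNorm k e v₁ * directionalVNorm k e v₂ := by
  obtain ⟨K, hK⟩ := exists_eLpNorm_rpow_mul_integral_lineDeriv_mul_le hk hlow hhigh
  refine ⟨4 * K + 1, by positivity, fun v₁ v₂ e he => ?_⟩
  set A := directionalVNorm k e v₁
  set B := directionalVNorm k e v₂
  have h_four_pi : ENNReal.ofReal (4 * π) = 2 * ENNReal.ofReal (2 * π) := by
    rw [← ENNReal.ofReal_ofNat 2, ← ENNReal.ofReal_mul zero_le_two]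
    ring_nf
  have h_cancel : ENNReal.ofReal (2 * π)⁻¹ * ENNReal.ofReal (2 * π) = 1 := by
    rw [← ENNReal.ofReal_mul (by positivity), inv_mul_cancel₀ Real.two_pi_pos.ne',
      ENNReal.ofReal_one]
  calc _ = ENNReal.ofReal (2 * π)⁻¹ * _ :=
        eLpNorm_fourierMul_rpow_inner_mul_mul (by linarith) v₁ v₂ e
    _ ≤ ENNReal.ofReal (2 * π)⁻¹ * (K * (ENNReal.ofReal (2 * π) * A * B
          + A * (ENNReal.ofReal (2 * π) * B) + ENNReal.ofReal (4 * π) * (A * B))) := by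
        refine mul_le_mul_right ((hK (𝓕 v₁) (𝓕 v₂) e he).trans ?_) _
        gcongr
        · exact weightedNorm_lineDeriv_fourier_le_directionalVNorm k e v₁
        · exact weightedNorm_fourier_le_directionalVNorm k e v₂
        · exact weightedNorm_fourier_le_directionalVNorm k e v₁
        · exact weightedNorm_lineDeriv_fourier_le_directionalVNorm k e v₂
        · exact weightedNorm_fourier_le_directionalVNorm k e v₁
        · exact weightedNorm_fourier_le_directionalVNorm k e v₂
    _ = ENNReal.ofReal (2 * π)⁻¹ * ENNReal.ofReal (2 * π) * (4 * K) * A * B := by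
        rw [h_four_pi]
        ring
    _ ≤ ENNReal.ofReal (4 * K + 1) * A * B := by
        gcongr
        rw [h_cancel, one_mul, ENNReal.ofReal_add (by positivity) zero_le_one,
          ENNReal.ofReal_mul zero_le_four, ENNReal.ofReal_coe_nnreal, ENNReal.ofReal_ofNat]
        exact le_self_add

end DirectionalNorm

lemma directionalVNorm_single_le_VkNorm (k : ℝ) (j : Fin 2) (f : V2 → ℂ) :
    directionalVNorm k (EuclideanSpace.single j 1) f ≤ VkNorm k f := by
  refine sup_le_sup le_rfl (eLpNorm_mono fun x => ?_)
  simp only [EuclideanSpace.inner_single_right, one_mul, conj_trivial]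
  exact PiLp.norm_apply_le ((WithLp.equiv 2 (Fin 2 → ℂ)).symm
    (fun j => japMul (k - 1) (fun y => (y j : ℂ) * f y) x)) j

/-- Estimate (3.14) of Lemma 3.2: in `ℝ²`, for `1 < k < 2`,
`‖ω^{2k−2}(x v₁ v₂)‖₂ ≤ C ‖v₁;V^k‖ ‖v₂;V^k‖` (componentwise in `x`). -/
theorem stmt_10 (k : ℝ) (hk1 : 1 < k) (hk2 : k < 2) :
    ∃ C : ℝ, 0 < C ∧ ∀ (v₁ v₂ : SchwartzMap V2 ℂ) (j : Fin 2),
      eLpNorm (omMul (2 * k - 2) (fun x => (x j : ℂ) * v₁ x * v₂ x)) 2 volume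
        ≤ ENNReal.ofReal C * VkNorm k (fun y => v₁ y) * VkNorm k (fun y => v₂ y) := by
  have h_dim : (finrank ℝ V2 : ℝ) = 2 := by simp
  have h_exp : 2 * k - 1 - (finrank ℝ V2 : ℝ) / 2 = 2 * k - 2 := by linarith
  obtain ⟨C, hC, h_bound⟩ := stmt_10_general (E := V2) hk1.le (by linarith) (by linarith)
  refine ⟨C, hC, fun v₁ v₂ j => ?_⟩
  have h_j := h_bound v₁ v₂ (EuclideanSpace.single j 1) (by simp)
  simp only [h_exp, EuclideanSpace.inner_single_right, one_mul, conj_trivial] at h_j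
  refine h_j.trans ?_
  gcongr <;> exact directionalVNorm_single_le_VkNorm k j _
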